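/- arXiv:2001.00654 — 2 statements merged into one kernel-verified Lean document; each statement's English description precedes it below -/
import Mathlib

section
/- Let n ≥ 1. Then the following identity of polynomials in ℚ[t] holds: n · Σ_{π ∈ 𝔠_n} t^{des(π)+1} = Σ_{d ∣ n} μ(d) (1−t)^{n−n/d} A_{n/d}(t). -/
open scoped Classical

noncomputable section

def oneLine (n : ℕ) (π : Equiv.Perm (Fin n)) (i : ℕ) : ℕ :=
  if h : 1 ≤ i ∧ i ≤ n then (π ⟨i - 1, by omega⟩).val + 1 else 0

def des (n : ℕ) (π : Equiv.Perm (Fin n)) : ℕ :=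
  ((Finset.Icc 1 (n - 1)).filter fun i => oneLine n π (i + 1) < oneLine n π i).card

def pk (n : ℕ) (π : Equiv.Perm (Fin n)) : ℕ :=
  ((Finset.Icc 2 (n - 1)).filter fun i =>
    oneLine n π (i - 1) < oneLine n π i ∧ oneLine n π (i + 1) < oneLine n π i).card

def lpk (n : ℕ) (π : Equiv.Perm (Fin n)) : ℕ :=
  ((Finset.Icc 1 (n - 1)).filter fun i =>
    oneLine n π (i - 1) < oneLine n π i ∧ oneLine n π (i + 1) < oneLine n π i).card

def pval (n : ℕ) (π : Equiv.Perm (Fin n)) : ℕ :=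
  ((Finset.Icc 2 (n - 1)).filter fun i =>
    oneLine n π i < oneLine n π (i - 1) ∧ oneLine n π i < oneLine n π (i + 1)).card

def udr (n : ℕ) (π : Equiv.Perm (Fin n)) : ℕ := lpk n π + pval n π + 1

def fullCycleType (n : ℕ) (π : Equiv.Perm (Fin n)) : Multiset ℕ :=
  π.cycleType + Multiset.replicate (n - π.support.card) 1

def numCycles (n : ℕ) (π : Equiv.Perm (Fin n)) : ℕ := Multiset.card (fullCycleType n π)

def numOddCycles (n : ℕ) (π : Equiv.Perm (Fin n)) : ℕ :=
  Multiset.card ((fullCycleType n π).filter fun p => p % 2 = 1)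

def IsCyclicPerm (n : ℕ) (π : Equiv.Perm (Fin n)) : Prop :=
  fullCycleType n π = {n}

def cyclicSet (n : ℕ) : Finset (Equiv.Perm (Fin n)) :=
  Finset.univ.filter fun π => IsCyclicPerm n π

def invSet (n : ℕ) : Finset (Equiv.Perm (Fin n)) :=
  Finset.univ.filter fun π => π ^ 2 = 1

def eulerianA (m : ℕ) : Polynomial ℚ :=
  ∑ π : Equiv.Perm (Fin m), Polynomial.X ^ (des m π + 1)

def peakP (m : ℕ) : Polynomial ℚ :=
  ∑ π : Equiv.Perm (Fin m), Polynomial.X ^ (pk m π + 1)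

def leftPeakP (m : ℕ) : Polynomial ℚ :=
  ∑ π : Equiv.Perm (Fin m), Polynomial.X ^ (lpk m π)

def cnk (n k : ℕ) : ℕ :=
  (Finset.univ.filter fun π : Equiv.Perm (Fin n) =>
    (∀ p ∈ fullCycleType n π, ¬ (4 ∣ p)) ∧ numCycles n (π ^ 2) = k).card

def bnk (n k : ℕ) : ℕ :=
  (Finset.univ.filter fun π : Equiv.Perm (Fin n) => numCycles n (π ^ 2) = k).card

def dnk (n k : ℕ) : ℕ :=
  (Finset.univ.filter fun π : Equiv.Perm (Fin n) => numOddCycles n (π ^ 2) = k).card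

/-!
A map `f : [n] → [k]` is compatible with `π` if it increases weakly, and strictly across the
descents of `π`. Adding to `f i` the number of non-descents before `i` makes it strictly increasing,
so compatible maps are counted by a binomial coefficient and have generating function
`t ^ (des π + 1) / (1 - t) ^ (n + 1)` in `k`.

Sorting a word of length `n` shows that each of the `k ^ n` words comes from exactly one compatible
pair `(π, f)`, which gives `A_n(t) / (1 - t) ^ (n + 1) = ∑ k ^ n t ^ k`. Following Gessel and
Reutenauer, the pairs with `π` cyclic correspond instead to primitive necklaces: reading `f` along
`π` from a starting point `i` gives a word of minimal period `n`, and from such a word one recovers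
`π` as the action of the shift on its `n` rotations in lexicographic order, `f` as their first
letters and `i` as the rank of the word. Möbius inversion counts the primitive words.
-/

section PeriodicPoints

open Function

variable {α ι : Type*} {f : α → α}

theorem ncard_ptsOfPeriod_eq_sum_divisors {n : ℕ} (hn : 0 < n) (hfin : (ptsOfPeriod f n).Finite) :
    (ptsOfPeriod f n).ncard = ∑ d ∈ n.divisors, {x | minimalPeriod f x = d}.ncard := by
  have hmaps : ∀ x ∈ hfin.toFinset, minimalPeriod f x ∈ n.divisors := fun x hx =>
    Nat.mem_divisors.2 ⟨(hfin.mem_toFinset.1 hx).minimalPeriod_dvd, hn.ne'⟩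
  rw [Set.ncard_eq_toFinset_card _ hfin, Finset.card_eq_sum_card_fiberwise hmaps]
  refine Finset.sum_congr rfl fun d hd => ?_
  rw [← Set.ncard_coe_finset]
  congr 1
  ext x
  simp only [Finset.coe_filter, Set.Finite.mem_toFinset, Set.mem_ofPred_eq, and_iff_right_iff_imp]
  rintro rfl
  exact isPeriodicPt_iff_minimalPeriod_dvd.2 (Nat.dvd_of_mem_divisors hd)

theorem ncard_setOf_minimalPeriod_eq {R : Type*} [Ring R]
    (hfin : ∀ m > 0, (ptsOfPeriod f m).Finite) {n : ℕ} (hn : 0 < n) :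
    ({x | minimalPeriod f x = n}.ncard : R) =
      ∑ d ∈ n.divisors, (ArithmeticFunction.moebius d : R) * (ptsOfPeriod f (n / d)).ncard := by
  have hsum : ∀ m > 0, ∑ d ∈ m.divisors, ({x | minimalPeriod f x = d}.ncard : R) =
      (ptsOfPeriod f m).ncard := fun m hm => by
    rw [ncard_ptsOfPeriod_eq_sum_divisors hm (hfin m hm), Nat.cast_sum]
  rw [← ArithmeticFunction.sum_eq_iff_sum_mul_moebius_eq.1 hsum n hn]
  exact Nat.sum_divisorsAntidiagonal
    fun a b => (ArithmeticFunction.moebius a : R) * (ptsOfPeriod f b).ncard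

theorem image_Iio_minimalPeriod_eq_range {x : α} (hx : x ∈ periodicPts f) :
    (f^[·] x) '' Set.Iio (minimalPeriod f x) = Set.range (f^[·] x) := by
  refine (Set.image_subset_range _ _).antisymm ?_
  rintro _ ⟨m, rfl⟩
  exact ⟨m % minimalPeriod f x, Nat.mod_lt _ (minimalPeriod_pos_of_mem_periodicPts hx),
    iterate_mod_minimalPeriod_eq⟩

theorem exists_strictMono_range_eq_orbit {β : Type*} [LinearOrder β] {g : α → β}
    (hg : Injective g) {x : α} (hx : x ∈ periodicPts f) :
    ∃ e : Fin (minimalPeriod f x) → α,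
      StrictMono (g ∘ e) ∧ Set.range e = Set.range (f^[·] x) := by
  let _ : LinearOrder α := LinearOrder.lift' g hg
  have hinj : Set.InjOn (f^[·] x) (Finset.range (minimalPeriod f x)) := by
    rw [Finset.coe_range]
    exact iterate_injOn_Iio_minimalPeriod
  have hcard := (Finset.card_image_of_injOn hinj).trans (Finset.card_range _)
  refine ⟨Finset.orderEmbOfFin _ hcard,
    fun _ _ hij => (Finset.orderEmbOfFin _ hcard).strictMono hij, ?_⟩
  rw [Finset.range_orderEmbOfFin, Finset.coe_image, Finset.coe_range,
    image_Iio_minimalPeriod_eq_range hx]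

theorem exists_perm_semiconj_of_range_eq_orbit [Finite ι] {e : ι → α} (he : Injective e)
    {x : α} (hx : x ∈ periodicPts f) (hrange : Set.range e = Set.range (f^[·] x)) :
    ∃ π : Equiv.Perm ι, Semiconj e π f := by
  have hmem : ∀ i, ∃ m, f^[m] x = e i := fun i => hrange.subset ⟨i, rfl⟩
  have hnext : ∀ i, ∃ j, e j = f (e i) := fun i => by
    obtain ⟨m, hm⟩ := hmem i
    exact hrange.superset ⟨m + 1, by simp only [iterate_succ_apply', hm]⟩
  have hper : ∀ i, IsPeriodicPt f (minimalPeriod f x) (e i) := fun i => by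
    obtain ⟨m, hm⟩ := hmem i
    exact hm ▸ (isPeriodicPt_minimalPeriod f x).apply_iterate m
  choose p hp using hnext
  have hp_inj : Injective p := fun i j hij =>
    he ((bijOn_ptsOfPeriod f (minimalPeriod_pos_of_mem_periodicPts hx)).injOn (hper i) (hper j)
      (by rw [← hp, ← hp, hij]))
  exact ⟨Equiv.ofBijective p (Finite.injective_iff_bijective.1 hp_inj), hp⟩

theorem semiconj_pow_apply {e : ι → α} {π : Equiv.Perm ι} (h : Semiconj e π f) (m : ℕ) (i : ι) :
    e ((π ^ m) i) = f^[m] (e i) := by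
  rw [← Equiv.Perm.iterate_eq_pow]
  exact h.iterate_right m i

theorem range_eq_orbit_of_isCycleOn_univ [Finite ι] {e : ι → α} {π : Equiv.Perm ι}
    (h : Semiconj e π f) (hπ : π.IsCycleOn Set.univ) (i : ι) :
    Set.range e = Set.range (f^[·] (e i)) := by
  rw [← Set.image_univ, ← hπ.range_pow Set.finite_univ (Set.mem_univ i), ← Set.range_comp]
  exact congrArg Set.range (funext fun m => semiconj_pow_apply h m i)

theorem isCycleOn_univ_of_range_eq_orbit {e : ι → α} {π : Equiv.Perm ι} (h : Semiconj e π f)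
    (he : Injective e) {x : α} (hx : Set.range e = Set.range (f^[·] x)) :
    π.IsCycleOn Set.univ := by
  obtain ⟨i, rfl⟩ : x ∈ Set.range e := hx.superset ⟨0, rfl⟩
  have hi : ∀ j, π.SameCycle i j := fun j => by
    obtain ⟨m, hm⟩ : e j ∈ Set.range (f^[·] (e i)) := hx.subset ⟨j, rfl⟩
    exact ⟨m, he (by rw [zpow_natCast, semiconj_pow_apply h, ← hm])⟩
  exact ⟨π.bijective.bijOn_univ, fun j _ k _ => (hi j).symm.trans (hi k)⟩

theorem minimalPeriod_eq_card_of_isCycleOn_univ [Fintype ι] {e : ι → α} {π : Equiv.Perm ι}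
    (h : Semiconj e π f) (he : Injective e) (hπ : π.IsCycleOn Set.univ) (i : ι) :
    minimalPeriod f (e i) = Fintype.card ι := by
  rw [← Finset.coe_univ] at hπ
  refine Nat.dvd_right_iff_eq.1 fun m => ?_
  rw [← isPeriodicPt_iff_minimalPeriod_dvd, IsPeriodicPt, IsFixedPt, ← semiconj_pow_apply h,
    he.eq_iff, hπ.pow_apply_eq (Finset.mem_univ i), Finset.card_univ]

end PeriodicPoints

section Words

open Function

variable {α : Type*}

/-- The one-sided shift on infinite words. -/
def shift (w : ℕ → α) : ℕ → α := fun j => w (j + 1)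

theorem shift_iterate_apply (m : ℕ) (w : ℕ → α) (j : ℕ) : shift^[m] w j = w (j + m) := by
  induction m generalizing w with
  | zero => rfl
  | succ m ih => rw [iterate_succ_apply, ih, shift, add_assoc]

theorem isPeriodicPt_shift_iff {n : ℕ} {w : ℕ → α} : IsPeriodicPt shift n w ↔ Periodic w n := by
  simp only [IsPeriodicPt, IsFixedPt, funext_iff, shift_iterate_apply, Periodic]

/-- A word of period `n` amounts to its first `n` letters. -/
def ptsOfPeriodShiftEquiv {n : ℕ} (hn : 0 < n) :
    ptsOfPeriod (shift : (ℕ → α) → ℕ → α) n ≃ (Fin n → α) where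
  toFun w i := w.1 i
  invFun v := ⟨fun j => v ⟨j % n, Nat.mod_lt j hn⟩, isPeriodicPt_shift_iff.2 fun j => by simp⟩
  left_inv w := Subtype.ext (funext (isPeriodicPt_shift_iff.1 w.2).map_mod_nat)
  right_inv v := funext fun i => by simp [Nat.mod_eq_of_lt i.2]

theorem finite_ptsOfPeriod_shift [Finite α] {n : ℕ} (hn : 0 < n) :
    (ptsOfPeriod (shift : (ℕ → α) → ℕ → α) n).Finite :=
  Set.finite_coe_iff.1 <| Finite.of_equiv _ (ptsOfPeriodShiftEquiv hn).symm

theorem ncard_ptsOfPeriod_shift {n : ℕ} (hn : 0 < n) :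
    (ptsOfPeriod (shift : (ℕ → α) → ℕ → α) n).ncard = Nat.card α ^ n := by
  rw [← Nat.card_coe_set_eq, Nat.card_congr (ptsOfPeriodShiftEquiv hn), Nat.card_fun, Nat.card_fin]

theorem toLex_lt_toLex_iff_shift [LT α] {v w : ℕ → α} :
    toLex v < toLex w ↔ v 0 < w 0 ∨ v 0 = w 0 ∧ toLex (shift v) < toLex (shift w) := by
  constructor
  · rintro ⟨_ | j, heq, hlt⟩
    · exact .inl hlt
    · exact .inr ⟨heq 0 j.succ_pos, j, fun i hi => heq (i + 1) (Nat.succ_lt_succ hi), hlt⟩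
  · rintro (hlt | ⟨h0, j, heq, hlt⟩)
    · exact ⟨0, fun i hi => absurd hi i.not_lt_zero, hlt⟩
    · refine ⟨j + 1, fun i hi => ?_, hlt⟩
      cases i with
      | zero => exact h0
      | succ i => exact heq i (Nat.lt_of_succ_lt_succ hi)

end Words

section Compatibility

open Function

variable {ι α : Type*}

/-- `f` is compatible with `π` if it is weakly increasing, and strictly so across the descents of
`π`; in other words, if `i ↦ (f i, π i)` increases lexicographically. -/
def IsCompatible [LinearOrder ι] [LinearOrder α] (π : Equiv.Perm ι) (f : ι → α) : Prop :=
  StrictMono fun i => toLex (f i, π i)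

/-- The letters read by `f` along the `π`-orbit of `i`. -/
def itinerary (π : Equiv.Perm ι) (f : ι → α) (i : ι) : ℕ → α := fun j => f ((π ^ j) i)

theorem semiconj_itinerary (π : Equiv.Perm ι) (f : ι → α) :
    Semiconj (itinerary π f) π shift := fun i => by
  funext j
  rw [itinerary, shift, itinerary, pow_succ, Equiv.Perm.mul_apply]

theorem eq_itinerary_of_semiconj {π : Equiv.Perm ι} {e : ι → ℕ → α} (h : Semiconj e π shift) :
    e = itinerary π (e · 0) := by
  funext i j
  rw [itinerary, semiconj_pow_apply h, shift_iterate_apply, zero_add]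

variable [LinearOrder α]

theorem itinerary_lt_itinerary_iff {π : Equiv.Perm ι} {f : ι → α} {i j : ι} :
    toLex (itinerary π f i) < toLex (itinerary π f j) ↔
      f i < f j ∨ f i = f j ∧ toLex (itinerary π f (π i)) < toLex (itinerary π f (π j)) := by
  rw [toLex_lt_toLex_iff_shift, ← semiconj_itinerary, ← semiconj_itinerary]
  rfl

variable [LinearOrder ι]

theorem isCompatible_iff_lt {π : Equiv.Perm ι} {f : ι → α} :
    IsCompatible π f ↔ ∀ ⦃i j⦄, i < j → f i < f j ∨ f i = f j ∧ π i < π j := by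
  simp only [IsCompatible, StrictMono, Prod.Lex.toLex_lt_toLex]

theorem isCompatible_of_strictMono_itinerary {π : Equiv.Perm ι} {f : ι → α}
    (h : StrictMono fun i => toLex (itinerary π f i)) : IsCompatible π f :=
  isCompatible_iff_lt.2 fun _ _ hij =>
    (itinerary_lt_itinerary_iff.1 (h hij)).imp_right (And.imp_right h.lt_iff_lt.1)

theorem not_forall_pow_lt_pow [Finite ι] {π : Equiv.Perm ι} (hπ : π.IsCycleOn Set.univ)
    (i j : ι) : ¬ ∀ m : ℕ, (π ^ m) i < (π ^ m) j := by
  intro h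
  have : Nonempty ι := ⟨i⟩
  obtain ⟨top, htop⟩ := Finite.exists_max (id : ι → ι)
  obtain ⟨m, rfl⟩ := hπ.exists_pow_eq' Set.finite_univ (Set.mem_univ i) (Set.mem_univ top)
  exact (h m).not_ge (htop _)

theorem IsCompatible.strictMono_itinerary [Finite ι] {π : Equiv.Perm ι} {f : ι → α}
    (h : IsCompatible π f) (hπ : π.IsCycleOn Set.univ) :
    StrictMono fun i => toLex (itinerary π f i) := by
  intro i j hij
  by_contra hnot
  have hpow : ∀ m : ℕ, (π ^ m) i < (π ^ m) j ∧
      ¬ toLex (itinerary π f ((π ^ m) i)) < toLex (itinerary π f ((π ^ m) j)) := fun m => by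
    induction m with
    | zero => exact ⟨hij, hnot⟩
    | succ m ih =>
      have hstep := isCompatible_iff_lt.1 h ih.1
      have hnlt := itinerary_lt_itinerary_iff.not.1 ih.2
      rw [pow_succ', Equiv.Perm.mul_apply, Equiv.Perm.mul_apply]
      tauto
  exact not_forall_pow_lt_pow hπ i j fun m => (hpow m).1

theorem IsCompatible.injective_itinerary [Finite ι] {π : Equiv.Perm ι} {f : ι → α}
    (h : IsCompatible π f) (hπ : π.IsCycleOn Set.univ) : Injective (itinerary π f) :=
  fun _ _ hij => (h.strictMono_itinerary hπ).injective (congrArg toLex hij)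

theorem eq_of_itinerary_eq [Finite ι] {π π' : Equiv.Perm ι} {f f' : ι → α}
    (hπ : π.IsCycleOn Set.univ) (hπ' : π'.IsCycleOn Set.univ)
    (h : IsCompatible π f) (h' : IsCompatible π' f') {i i' : ι}
    (heq : itinerary π f i = itinerary π' f' i') : i = i' ∧ π = π' ∧ f = f' := by
  have hrange : Set.range (itinerary π f) = Set.range (itinerary π' f') := by
    rw [range_eq_orbit_of_isCycleOn_univ (semiconj_itinerary π f) hπ i, heq,
      ← range_eq_orbit_of_isCycleOn_univ (semiconj_itinerary π' f') hπ' i']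
  have hlex := ((h.strictMono_itinerary hπ).range_inj (h'.strictMono_itinerary hπ')).1 <| by
    rw [Set.range_comp' toLex, Set.range_comp' toLex, hrange]
  have hitin : itinerary π f = itinerary π' f' := funext fun j => toLex.injective (congrFun hlex j)
  have hinj := h.injective_itinerary hπ
  refine ⟨hinj (by rw [heq, hitin]), Equiv.ext fun j => hinj ?_, funext fun j => ?_⟩
  · rw [semiconj_itinerary, hitin, semiconj_itinerary]
  · exact congrFun (congrFun hitin j) 0

theorem exists_itinerary_eq {n : ℕ} (hn : 0 < n) {w : ℕ → α} (hw : minimalPeriod shift w = n) :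
    ∃ (i : Fin n) (π : Equiv.Perm (Fin n)) (f : Fin n → α),
      π.IsCycleOn Set.univ ∧ IsCompatible π f ∧ itinerary π f i = w := by
  subst hw
  have hper := minimalPeriod_pos_iff_mem_periodicPts.1 hn
  obtain ⟨e, hmono, hrange⟩ := exists_strictMono_range_eq_orbit toLex.injective hper
  have he : Injective e := hmono.injective.of_comp
  obtain ⟨π, hsemi⟩ := exists_perm_semiconj_of_range_eq_orbit he hper hrange
  obtain ⟨i, hi⟩ : w ∈ Set.range e := hrange.superset ⟨0, rfl⟩
  have hitin := eq_itinerary_of_semiconj hsemi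
  refine ⟨i, π, (e · 0), isCycleOn_univ_of_range_eq_orbit hsemi he hrange,
    isCompatible_of_strictMono_itinerary ?_, ?_⟩
  · rwa [← hitin]
  · rw [← hitin, hi]

end Compatibility

theorem isCyclicPerm_iff_isCycleOn_univ {n : ℕ} (hn : 0 < n) (π : Equiv.Perm (Fin n)) :
    IsCyclicPerm n π ↔ π.IsCycleOn Set.univ := by
  obtain rfl | hn1 : n = 1 ∨ 1 < n := by omega
  · exact iff_of_true (by simp [IsCyclicPerm, fullCycleType, Subsingleton.elim π 1])
      (Equiv.Perm.isCycleOn_of_subsingleton π _)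
  have : Nontrivial (Fin n) := Fin.nontrivial_iff_two_le.2 hn1
  have hsupport : (π.support : Set (Fin n)) = {i | π i ≠ i} :=
    Set.ext fun _ => Equiv.Perm.mem_support
  constructor
  · intro h
    have h1 : 1 ∉ fullCycleType n π := by
      rw [h, Multiset.mem_singleton]
      exact hn1.ne
    have hfull : n - π.support.card = 0 := by
      by_contra hne
      exact h1 (Multiset.mem_add.2 (.inr (Multiset.mem_replicate.2 ⟨hne, rfl⟩)))
    have htype : π.cycleType = {n} := by
      rwa [IsCyclicPerm, fullCycleType, hfull, Multiset.replicate_zero, add_zero] at h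
    have hcycle : π.IsCycle := Equiv.Perm.card_cycleType_eq_one.1 <| by
      rw [htype, Multiset.card_singleton]
    have huniv : π.support = Finset.univ := by
      rw [← Finset.card_eq_iff_eq_univ, ← Equiv.Perm.sum_cycleType, htype, Multiset.sum_singleton,
        Fintype.card_fin]
    rw [← Finset.coe_univ, ← huniv, hsupport]
    exact hcycle.isCycleOn
  · intro h
    have hmoved : ∀ i, π i ≠ i := fun i => h.apply_ne Set.nontrivial_univ (Set.mem_univ i)
    have hcycle : π.IsCycle := Equiv.Perm.isCycle_iff_exists_isCycleOn.2
      ⟨Set.univ, Set.nontrivial_univ, h, fun _ _ => Set.mem_univ _⟩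
    have huniv : π.support = Finset.univ :=
      Finset.eq_univ_of_forall fun i => Equiv.Perm.mem_support.2 (hmoved i)
    simp [IsCyclicPerm, fullCycleType, hcycle.cycleType, huniv]

section Counting

open Function

variable {α : Type*} [LinearOrder α] {n : ℕ}

theorem sum_card_isCompatible [Finite α] :
    ∑ π : Equiv.Perm (Fin n), Nat.card {f : Fin n → α // IsCompatible π f} = Nat.card α ^ n := by
  let fiberEquiv (π : Equiv.Perm (Fin n)) :
      {v : Fin n → α // Tuple.sort v = π} ≃ {f : Fin n → α // IsCompatible π f} :=
    (π.symm.arrowCongr (Equiv.refl α)).subtypeEquiv fun v => eq_comm.trans Tuple.eq_sort_iff'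
  rw [← Nat.card_sigma,
    ← Nat.card_congr ((Equiv.sigmaFiberEquiv Tuple.sort).symm.trans
      (Equiv.sigmaCongrRight fiberEquiv)),
    Nat.card_fun, Nat.card_fin]

theorem card_mul_sum_card_isCompatible_cyclicSet [Finite α] (hn : 0 < n) :
    n * ∑ π ∈ cyclicSet n, Nat.card {f : Fin n → α // IsCompatible π f} =
      {w : ℕ → α | minimalPeriod shift w = n}.ncard := by
  have hcyc (π : cyclicSet n) : π.1.IsCycleOn Set.univ :=
    (isCyclicPerm_iff_isCycleOn_univ hn π.1).1 (Finset.mem_filter.1 π.2).2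
  let word : Fin n × (Σ π : cyclicSet n, {f : Fin n → α // IsCompatible π.1 f}) →
      {w : ℕ → α | minimalPeriod shift w = n} := fun ⟨i, π, f⟩ =>
    ⟨itinerary π.1 f.1 i, (minimalPeriod_eq_card_of_isCycleOn_univ (semiconj_itinerary _ _)
      (f.2.injective_itinerary (hcyc π)) (hcyc π) i).trans (Fintype.card_fin n)⟩
  have hword : Bijective word := by
    constructor
    · rintro ⟨i, π, f, hf⟩ ⟨i', π', f', hf'⟩ heq
      obtain ⟨rfl, hπ, rfl⟩ :=
        eq_of_itinerary_eq (hcyc π) (hcyc π') hf hf' (congrArg Subtype.val heq)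
      obtain rfl := Subtype.ext hπ
      rfl
    · rintro ⟨w, hw⟩
      obtain ⟨i, π, f, hπ, hf, heq⟩ := exists_itinerary_eq hn hw
      have hmem : π ∈ cyclicSet n := Finset.mem_filter.2
        ⟨Finset.mem_univ π, (isCyclicPerm_iff_isCycleOn_univ hn π).2 hπ⟩
      exact ⟨⟨i, ⟨π, hmem⟩, f, hf⟩, Subtype.ext heq⟩
  rw [← Nat.card_coe_set_eq, ← Nat.card_congr (Equiv.ofBijective word hword), Nat.card_prod,
    Nat.card_fin, Nat.card_sigma]
  congr 1
  exact (Finset.sum_coe_sort (cyclicSet n)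
    fun π => Nat.card {f : Fin n → α // IsCompatible π f}).symm

end Counting

theorem oneLine_add_one {n : ℕ} (π : Equiv.Perm (Fin n)) (i : Fin n) :
    oneLine n π (i + 1) = π i + 1 := by
  rw [oneLine, dif_pos (by omega)]
  rfl

/-- Whether positions `j` and `j + 1`, counted from `0`, do not form a descent of `π`. -/
def IsNondescent {n : ℕ} (π : Equiv.Perm (Fin n)) (j : ℕ) : Prop :=
  ¬ oneLine n π (j + 2) < oneLine n π (j + 1)

theorem isNondescent_iff {m : ℕ} (π : Equiv.Perm (Fin (m + 1))) (j : Fin m) :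
    IsNondescent π j ↔ π j.castSucc < π j.succ := by
  have hne : π j.castSucc ≠ π j.succ := π.injective.ne j.castSucc_lt_succ.ne
  have h0 := oneLine_add_one π j.castSucc
  have h1 := oneLine_add_one π j.succ
  rw [Fin.val_castSucc] at h0
  rw [Fin.val_succ] at h1
  rw [IsNondescent, h0, h1]
  omega

theorem des_add_count_isNondescent {m : ℕ} (π : Equiv.Perm (Fin (m + 1))) :
    des (m + 1) π + Nat.count (IsNondescent π) m = m := by
  have hdes : des (m + 1) π =
      ((Finset.range m).filter fun j => ¬ IsNondescent π j).card := by
    rw [des]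
    refine (Finset.card_bij (fun j _ => j + 1) ?_ ?_ ?_).symm
    · simp only [IsNondescent, not_not, Finset.mem_filter, Finset.mem_range, Finset.mem_Icc]
      exact fun j hj => ⟨by omega, hj.2⟩
    · exact fun _ _ _ _ => Nat.succ_injective.eq_iff.1
    · simp only [IsNondescent, not_not, Finset.mem_filter, Finset.mem_range, Finset.mem_Icc]
      rintro (_ | j) hj
      · omega
      · exact ⟨j, ⟨by omega, hj.2⟩, rfl⟩
  rw [hdes, Nat.count_eq_card_filter_range, add_comm, Finset.card_filter_add_card_filter_not,
    Finset.card_range]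

theorem isCompatible_iff_strictMono_add_count {m k : ℕ} {π : Equiv.Perm (Fin (m + 1))}
    {f : Fin (m + 1) → Fin k} :
    IsCompatible π f ↔ StrictMono fun i => (f i : ℕ) + Nat.count (IsNondescent π) i := by
  rw [IsCompatible, Fin.strictMono_iff_lt_succ, Fin.strictMono_iff_lt_succ]
  refine forall_congr' fun j => ?_
  rw [Prod.Lex.toLex_lt_toLex, ← isNondescent_iff, Fin.val_succ, Fin.val_castSucc, Nat.count_succ]
  split_ifs with h <;>
    simp only [h, Fin.lt_def, Fin.ext_iff, and_true, and_false, or_false] <;> omega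

theorem card_orderEmbedding_fin {α : Type*} [LinearOrder α] (n : ℕ) :
    Nat.card (Fin n ↪o α) = (Nat.card α).choose n := by
  rw [Nat.card_congr Set.powersetCard.ofFinEmbEquiv, Set.powersetCard.card]

theorem monotone_sub_count_of_strictMono (p : ℕ → Prop) {m : ℕ} {g : Fin (m + 1) → ℕ}
    (hg : StrictMono g) : Monotone fun i => (g i : ℤ) - Nat.count p i := by
  refine Fin.monotone_iff_le_succ.2 fun j => ?_
  have hlt := hg j.castSucc_lt_succ
  rw [Fin.val_succ, Fin.val_castSucc, Nat.count_succ]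
  split_ifs <;> push_cast <;> omega

theorem card_strictMono_add_count (p : ℕ → Prop) (m k : ℕ) :
    Nat.card {f : Fin (m + 1) → Fin k // StrictMono fun i => (f i : ℕ) + Nat.count p i} =
      (k + Nat.count p m).choose (m + 1) := by
  have hcount (i : Fin (m + 1)) : Nat.count p i ≤ Nat.count p m :=
    Nat.count_monotone p (Nat.le_of_lt_succ i.2)
  have hbounds (g : Fin (m + 1) ↪o Fin (k + Nat.count p m)) (i : Fin (m + 1)) :
      Nat.count p i ≤ g i ∧ g i - Nat.count p i < k := by
    have hmono := monotone_sub_count_of_strictMono p (Fin.val_strictMono.comp g.strictMono)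
    have hzero := hmono (Fin.zero_le i)
    have hlast := hmono (Fin.le_last i)
    have := (g (Fin.last m)).2
    simp only [Function.comp_apply, Fin.val_zero, Nat.count_zero, Fin.val_last] at hzero hlast
    omega
  let addCount : {f : Fin (m + 1) → Fin k // StrictMono fun i => (f i : ℕ) + Nat.count p i} ≃
      (Fin (m + 1) ↪o Fin (k + Nat.count p m)) :=
    { toFun := fun f => OrderEmbedding.ofStrictMono
        (fun i => ⟨f.1 i + Nat.count p i, add_lt_add_of_lt_of_le (f.1 i).2 (hcount i)⟩) f.2
      invFun := fun g => ⟨fun i => ⟨g i - Nat.count p i, (hbounds g i).2⟩, by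
        simp only [Nat.sub_add_cancel (hbounds g _).1]
        exact Fin.val_strictMono.comp g.strictMono⟩
      left_inv := fun f => Subtype.ext (funext fun _ => Fin.ext (Nat.add_sub_cancel _ _))
      right_inv := fun g => RelEmbedding.ext fun i => Fin.ext (Nat.sub_add_cancel (hbounds g i).1) }
  rw [Nat.card_congr addCount, card_orderEmbedding_fin, Nat.card_fin]

theorem card_isCompatible_fin {m : ℕ} (π : Equiv.Perm (Fin (m + 1))) (k : ℕ) :
    Nat.card {f : Fin (m + 1) → Fin k // IsCompatible π f} =
      (k + (m - des (m + 1) π)).choose (m + 1) := by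
  have hdes := des_add_count_isNondescent π
  simp only [isCompatible_iff_strictMono_add_count]
  rw [card_strictMono_add_count]
  congr 2
  omega

section GeneratingFunctions

open PowerSeries

theorem mk_card_isCompatible_mul {n : ℕ} (hn : 0 < n) (π : Equiv.Perm (Fin n)) :
    mk (fun k => (Nat.card {f : Fin n → Fin k // IsCompatible π f} : ℚ)) * (1 - X) ^ (n + 1) =
      X ^ (des n π + 1) := by
  obtain ⟨m, rfl⟩ := Nat.exists_eq_add_one.2 hn
  have hdes := des_add_count_isNondescent π
  have hshift : mk (fun k => (Nat.card {f : Fin (m + 1) → Fin k // IsCompatible π f} : ℚ)) =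
      X ^ (des (m + 1) π + 1) * mk fun k => ((m + 1 + k).choose (m + 1) : ℚ) := by
    ext k
    rw [coeff_X_pow_mul', coeff_mk, coeff_mk, card_isCompatible_fin]
    split_ifs with hk
    · congr 2
      omega
    · rw [Nat.choose_eq_zero_of_lt (by omega), Nat.cast_zero]
  rw [hshift, mul_assoc, mk_add_choose_mul_one_sub_pow_eq_one, mul_one]

theorem coe_eulerianA {n : ℕ} (hn : 0 < n) :
    (eulerianA n : ℚ⟦X⟧) = mk (fun k => (k : ℚ) ^ n) * (1 - X) ^ (n + 1) := by
  have hsum : mk (fun k => (k : ℚ) ^ n) = ∑ π : Equiv.Perm (Fin n),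
      mk fun k => (Nat.card {f : Fin n → Fin k // IsCompatible π f} : ℚ) := by
    ext k
    have hcard := sum_card_isCompatible (α := Fin k) (n := n)
    rw [Nat.card_fin] at hcard
    simp only [map_sum, coeff_mk]
    exact_mod_cast hcard.symm
  simp only [hsum, Finset.sum_mul, mk_card_isCompatible_mul hn, eulerianA,
    ← Polynomial.coeToPowerSeries.ringHom_apply, map_sum, map_pow]
  simp only [Polynomial.coeToPowerSeries.ringHom_apply, Polynomial.coe_X]

theorem card_mul_sum_cyclicSet_X_pow {n : ℕ} (hn : 0 < n) :
    (n : ℚ⟦X⟧) * ∑ π ∈ cyclicSet n, X ^ (des n π + 1) =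
      mk (fun k => ({w : ℕ → Fin k | Function.minimalPeriod shift w = n}.ncard : ℚ)) *
        (1 - X) ^ (n + 1) := by
  have hsum : mk (fun k => ({w : ℕ → Fin k | Function.minimalPeriod shift w = n}.ncard : ℚ)) =
      n * ∑ π ∈ cyclicSet n,
        mk fun k => (Nat.card {f : Fin n → Fin k // IsCompatible π f} : ℚ) := by
    ext k
    rw [← nsmul_eq_mul, map_nsmul, nsmul_eq_mul, map_sum]
    simp only [coeff_mk, ← card_mul_sum_card_isCompatible_cyclicSet hn, Nat.cast_mul, Nat.cast_sum]
  simp only [hsum, mul_assoc, Finset.sum_mul, mk_card_isCompatible_mul hn]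

theorem mk_ncard_minimalPeriod_shift {n : ℕ} (hn : 0 < n) :
    mk (fun k => ({w : ℕ → Fin k | Function.minimalPeriod shift w = n}.ncard : ℚ)) =
      ∑ d ∈ n.divisors, (ArithmeticFunction.moebius d : ℚ⟦X⟧) * mk fun k => (k : ℚ) ^ (n / d) := by
  ext k
  rw [coeff_mk, ncard_setOf_minimalPeriod_eq (fun m => finite_ptsOfPeriod_shift) hn, map_sum]
  refine Finset.sum_congr rfl fun d hd => ?_
  rw [ncard_ptsOfPeriod_shift (Nat.div_pos (Nat.divisor_le hd) (Nat.pos_of_mem_divisors hd)),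
    Nat.card_fin, Nat.cast_pow, ← zsmul_eq_mul, ← zsmul_eq_mul, map_zsmul, coeff_mk]

end GeneratingFunctions

theorem stmt4 (n : ℕ) (hn : 1 ≤ n) :
    (n : Polynomial ℚ) * ∑ π ∈ cyclicSet n, Polynomial.X ^ (des n π + 1)
      = ∑ d ∈ n.divisors,
          ((ArithmeticFunction.moebius d : ℤ) : Polynomial ℚ)
            * (1 - Polynomial.X) ^ (n - n / d) * eulerianA (n / d) := by
  apply Polynomial.coe_injective ℚ
  simp only [← Polynomial.coeToPowerSeries.ringHom_apply, map_mul, map_sum, map_pow, map_sub,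
    map_one, map_natCast, map_intCast]
  simp only [Polynomial.coeToPowerSeries.ringHom_apply, Polynomial.coe_X]
  rw [card_mul_sum_cyclicSet_X_pow hn, mk_ncard_minimalPeriod_shift hn, Finset.sum_mul]
  refine Finset.sum_congr rfl fun d hd => ?_
  have hpos : 0 < n / d := Nat.div_pos (Nat.divisor_le hd) (Nat.pos_of_mem_divisors hd)
  have hexp : n + 1 = n - n / d + (n / d + 1) := by have := Nat.div_le_self n d; omega
  rw [coe_eulerianA hpos, hexp, pow_add]
  ring

end
end

section
/- Let n ≥ 1 and let 𝔇_n denote the set of derangements of [n]. Then the following identity of formal power series in ℚ[[t]] holds: Σ_{π ∈ 𝔇_n} t^{des(π)+1} = (1−t)^{n+1} · Σ_{k ≥ 0} t^k ( Σ_{j=0}^{n} (−1)^j binom(k,j) k^{n−j} ). (Here binom(k,j) = 0 when j > k, so each coefficient is a finite integer.) -/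
open scoped Classical

noncomputable section

/-!
Sorting a word `w : Fin n → Fin k` stably produces a permutation of its positions. The words with
stable sort `π` are those that increase weakly along `π`, and strictly at the descents of `π`;
adding to each letter the number of ascents before it identifies them with the `n`-element subsets
of a set of size `k + n - 1 - des π`, so their generating function in `k` is
`X ^ (des π + 1) / (1 - X) ^ (n + 1)`. It remains to count the words whose stable sort is a
derangement.

Call `v` a fixed value of `w` if some position holding `v` is fixed by the stable sort. A given
letter `v` can be inserted into any word so that its new position is fixed, and any two such
insertions produce the same word. Deleting a fixed position leaves the other fixed values unchanged,
so, with `D n S` the number of words of length `n` having no fixed value in `S`,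
`D (n + 1) (S ∪ {v}) = D (n + 1) S - D n S` for `v ∉ S`, and Pascal's rule gives the alternating
sum.
-/

section StableSort

open Finset Tuple

variable {α : Type*} [LinearOrder α] {n : ℕ}

theorem sort_symm_lt_iff (w : Fin n → α) {x y : Fin n} :
    (sort w).symm y < (sort w).symm x ↔ w y < w x ∨ w y = w x ∧ y < x :=
  (graphEquiv₂ w).symm.lt_iff_lt.trans Prod.Lex.toLex_lt_toLex

theorem coe_sort_symm_apply (w : Fin n → α) (x : Fin n) :
    ((sort w).symm x : ℕ) = #{y | w y < w x} + #{y | y < x ∧ w y = w x} := by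
  have before_eq : Iio ((sort w).symm x) =
      image (sort w).symm {y | w y < w x ∨ w y = w x ∧ y < x} := by
    ext i
    simp [← sort_symm_lt_iff, Equiv.symm_apply_eq]
  rw [← Fin.card_Iio, before_eq, card_image_of_injective _ (sort w).symm.injective, filter_or,
    card_union_of_disjoint]
  · simp only [and_comm]
  · exact disjoint_filter.2 fun y _ hlt heq => hlt.ne heq.1

theorem sort_apply_eq_self_iff (w : Fin n → α) (x : Fin n) :
    sort w x = x ↔ #{y | y < x ∧ w y ≠ w x} = #{y | w y < w x} := by
  have before_split : #{y | y < x ∧ w y = w x} + #{y | y < x ∧ w y ≠ w x} = x := by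
    rw [← filter_filter, ← filter_filter, card_filter_add_card_filter_not, filter_gt_eq_Iio,
      Fin.card_Iio]
  rw [← Equiv.eq_symm_apply, Fin.ext_iff, coe_sort_symm_apply]
  omega

theorem not_of_card_filter_lt_eq {P : Fin n → Prop} [DecidablePred P] {a b : ℕ}
    (h : #{j : Fin n | j < a ∧ P j} = #{j : Fin n | j < b ∧ P j}) {i : Fin n}
    (hai : a ≤ i) (hib : i < b) : ¬P i := by
  have below_eq := eq_of_subset_of_card_le
    (monotone_filter_right univ fun j _ hj => ⟨hj.1.trans (hai.trans_lt hib), hj.2⟩) h.ge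
  intro hi
  have mem : i ∈ ({j | j < a ∧ P j} : Finset (Fin n)) := below_eq ▸ by simp [hib, hi]
  exact hai.not_gt (mem_filter.1 mem).2.1

theorem eq_of_sort_apply_eq_self {w : Fin n → α} {x y z : Fin n} (hx : sort w x = x)
    (hy : sort w y = y) (hxy : w x = w y) (hxz : x ≤ z) (hzy : z ≤ y) : w z = w y := by
  rcases hzy.eq_or_lt with rfl | hzy
  · rfl
  rw [sort_apply_eq_self_iff] at hx hy
  rw [hxy, ← hy] at hx
  exact not_not.1 (not_of_card_filter_lt_eq (P := (w · ≠ w y)) hx hxz hzy)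

end StableSort

section InsertRemove

open Finset Tuple

variable {α : Type*} {n : ℕ}

theorem removeNth_eq_removeNth_of_eqOn_Icc {w : Fin (n + 1) → α} {x y : Fin (n + 1)} (hxy : x ≤ y)
    (hw : ∀ z, x ≤ z → z ≤ y → w z = w y) : x.removeNth w = y.removeNth w := by
  funext i
  simp only [Fin.removeNth_apply]
  rcases lt_or_ge i.castSucc x with hix | hix
  · rw [Fin.succAbove_of_castSucc_lt _ _ hix, Fin.succAbove_of_castSucc_lt _ _ (hix.trans_le hxy)]
  rcases lt_or_ge i.castSucc y with hiy | hiy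
  · rw [Fin.succAbove_of_le_castSucc _ _ hix, Fin.succAbove_of_castSucc_lt _ _ hiy,
      hw _ (hix.trans i.castSucc_lt_succ.le) (Fin.castSucc_lt_iff_succ_le.1 hiy), hw _ hix hiy.le]
  · rw [Fin.succAbove_of_le_castSucc _ _ hix, Fin.succAbove_of_le_castSucc _ _ hiy]

theorem exists_perm_removing_fixedPoint {π : Equiv.Perm (Fin (n + 1))} {x : Fin (n + 1)}
    (hx : π x = x) : ∃ τ : Equiv.Perm (Fin n), ∀ i, x.succAbove (τ i) = π (x.succAbove i) := by
  have image_ne (i) : π (x.succAbove i) ≠ x := fun h =>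
    Fin.succAbove_ne x i (π.injective (h.trans hx.symm))
  choose τ hτ using fun i => Fin.exists_succAbove_eq (image_ne i)
  have τ_inj : Function.Injective τ := fun i j h =>
    Fin.succAbove_right_injective (π.injective (by rw [← hτ, ← hτ, h]))
  exact ⟨Equiv.ofBijective τ τ_inj.bijective_of_finite, hτ⟩

variable [LinearOrder α]

theorem sort_removeNth {w : Fin (n + 1) → α} {x : Fin (n + 1)} (hx : sort w x = x) (i : Fin n) :
    x.succAbove (sort (x.removeNth w) i) = sort w (x.succAbove i) := by
  obtain ⟨τ, hτ⟩ := exists_perm_removing_fixedPoint hx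
  obtain ⟨sorted, stable⟩ := eq_sort_iff.1 (Eq.refl (sort w))
  have mono := Fin.strictMono_succAbove x
  have τ_eq : τ = sort (x.removeNth w) := by
    refine eq_sort_iff.2 ⟨fun i j hij => ?_, fun i j hij heq => ?_⟩
    · simpa [Fin.removeNth_apply, hτ] using sorted (mono.monotone hij)
    · rw [Fin.removeNth_apply, Fin.removeNth_apply, hτ, hτ] at heq
      rw [← mono.lt_iff_lt, hτ, hτ]
      exact stable _ _ (mono hij) heq
  rw [← τ_eq, hτ]

theorem card_filter_univ_succAbove (P : Fin (n + 1) → Prop) [DecidablePred P] (p : Fin (n + 1)) :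
    #{x | P x} = (if P p then 1 else 0) + #{i | P (p.succAbove i)} := by
  simp only [card_filter, Fin.sum_univ_succAbove _ p]

theorem coe_sort_insertNth_symm_apply (p : Fin (n + 1)) (v : α) (w : Fin n → α) :
    ((sort (p.insertNth v w : Fin (n + 1) → α)).symm p : ℕ) =
      #{j | w j < v} + #{j | j.castSucc < p ∧ w j = v} := by
  simp [coe_sort_symm_apply, card_filter_univ_succAbove _ p, Fin.succAbove_lt_iff_castSucc_lt]

theorem sort_insertNth_apply_eq_self_iff (p : Fin (n + 1)) (v : α) (w : Fin n → α) :
    sort (p.insertNth v w : Fin (n + 1) → α) p = p ↔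
      #{j | j.castSucc < p ∧ w j ≠ v} = #{j | w j < v} := by
  simp [sort_apply_eq_self_iff, card_filter_univ_succAbove _ p, Fin.succAbove_lt_iff_castSucc_lt]

theorem exists_sort_insertNth_apply_eq_self (v : α) (w : Fin n → α) :
    ∃ p : Fin (n + 1), sort (p.insertNth v w : Fin (n + 1) → α) p = p := by
  -- Moving the new letter to the right can only increase its rank, so Knaster–Tarski applies.
  let rank : Fin (n + 1) →o Fin (n + 1) :=
    { toFun p := (sort (p.insertNth v w : Fin (n + 1) → α)).symm p
      monotone' p q hpq := by
        rw [Fin.le_def, coe_sort_insertNth_symm_apply, coe_sort_insertNth_symm_apply]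
        gcongr }
  exact ⟨rank.lfp, (Equiv.eq_symm_apply _).1 rank.map_lfp.symm⟩

theorem insertNth_eq_insertNth_of_sort_apply_eq_self {p q : Fin (n + 1)} {v : α} {w : Fin n → α}
    (hp : sort (p.insertNth v w : Fin (n + 1) → α) p = p)
    (hq : sort (q.insertNth v w : Fin (n + 1) → α) q = q) :
    (p.insertNth v w : Fin (n + 1) → α) = q.insertNth v w := by
  wlog hpq : p ≤ q generalizing p q
  · exact (this hq hp (le_of_not_ge hpq)).symm
  rw [sort_insertNth_apply_eq_self_iff] at hp hq
  have value_between (z : Fin (n + 1)) (hpz : p ≤ z) (hzq : z ≤ q) :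
      (p.insertNth v w : Fin (n + 1) → α) z = v := by
    rcases eq_or_ne z p with rfl | hzp
    · simp
    obtain ⟨j, rfl⟩ := Fin.exists_succAbove_eq hzp
    have hpj := (Fin.lt_succAbove_iff_le_castSucc p j).1 (hpz.lt_of_ne' hzp)
    rw [Fin.succAbove_of_le_castSucc p j hpj, ← Fin.castSucc_lt_iff_succ_le] at hzq
    rw [Fin.insertNth_apply_succAbove]
    exact not_not.1 (not_of_card_filter_lt_eq (P := (w · ≠ v)) (hp.trans hq.symm) hpj hzq)
  have removal_eq := removeNth_eq_removeNth_of_eqOn_Icc hpq fun z hpz hzq =>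
    (value_between z hpz hzq).trans (value_between q hpq le_rfl).symm
  rw [Fin.removeNth_insertNth] at removal_eq
  rw [Fin.eq_insertNth_iff]
  exact ⟨value_between q hpq le_rfl, removal_eq.symm⟩

end InsertRemove

section FixedValues

open Finset Tuple

variable {α : Type*} [LinearOrder α] {n : ℕ}

/-- The values of a word at the fixed points of its stable sorting permutation. -/
def fixedValues (w : Fin n → α) : Finset α :=
  image w {x | sort w x = x}

theorem mem_fixedValues {w : Fin n → α} {v : α} :
    v ∈ fixedValues w ↔ ∃ x, sort w x = x ∧ w x = v := by
  simp [fixedValues]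

theorem fixedValues_eq_empty_iff {w : Fin n → α} :
    fixedValues w = ∅ ↔ ∀ x, sort w x ≠ x := by
  simp [fixedValues, filter_eq_empty_iff]

theorem mem_fixedValues_removeNth {w : Fin (n + 1) → α} {x : Fin (n + 1)} (hx : sort w x = x)
    {u : α} (hu : u ≠ w x) : u ∈ fixedValues (x.removeNth w) ↔ u ∈ fixedValues w := by
  simp only [mem_fixedValues]
  constructor
  · rintro ⟨i, hi, rfl⟩
    exact ⟨x.succAbove i, by rw [← sort_removeNth hx, hi], rfl⟩
  · rintro ⟨y, hy, rfl⟩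
    obtain ⟨i, rfl⟩ := Fin.exists_succAbove_eq (ne_of_apply_ne w hu)
    exact ⟨i, Fin.succAbove_right_injective ((sort_removeNth hx i).trans hy), rfl⟩

theorem disjoint_fixedValues_removeNth {w : Fin (n + 1) → α} {x : Fin (n + 1)}
    (hx : sort w x = x) {S : Finset α} (hS : w x ∉ S) :
    Disjoint S (fixedValues (x.removeNth w)) ↔ Disjoint S (fixedValues w) := by
  simp only [disjoint_left]
  refine forall₂_congr fun u hu => not_congr ?_
  exact mem_fixedValues_removeNth hx (ne_of_mem_of_not_mem hu hS)

theorem removeNth_eq_removeNth_of_sort_apply_eq_self {w : Fin (n + 1) → α} {x y : Fin (n + 1)}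
    (hx : sort w x = x) (hy : sort w y = y) (hxy : w x = w y) :
    x.removeNth w = y.removeNth w := by
  wlog hle : x ≤ y generalizing x y
  · exact (this hy hx hxy.symm (le_of_not_ge hle)).symm
  exact removeNth_eq_removeNth_of_eqOn_Icc hle fun z => eq_of_sort_apply_eq_self hx hy hxy

end FixedValues

section CountingFixedValues

open Finset Tuple

variable {α : Type*} [LinearOrder α] [Fintype α]

theorem card_mem_fixedValues_and_disjoint (n : ℕ) {v : α} {S : Finset α} (hv : v ∉ S) :
    #{w : Fin (n + 1) → α | v ∈ fixedValues w ∧ Disjoint S (fixedValues w)} =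
      #{w : Fin n → α | Disjoint S (fixedValues w)} := by
  choose p hp using exists_sort_insertNth_apply_eq_self (n := n) v
  symm
  refine card_bij (fun w _ => (p w).insertNth v w) (fun w hw => ?_) (fun w _ w' _ heq => ?_)
    fun u hu => ?_
  · have hdisj := disjoint_fixedValues_removeNth (hp w) (S := S) (by simpa using hv)
    rw [Fin.removeNth_insertNth] at hdisj
    rw [mem_filter_univ, mem_fixedValues, ← hdisj]
    exact ⟨⟨p w, hp w, by simp⟩, (mem_filter_univ w).1 hw⟩
  · have same_value : (p w).insertNth (α := fun _ => α) v w (p w) =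
        (p w).insertNth (α := fun _ => α) v w (p w') := by
      rw [Fin.insertNth_apply_same, heq, Fin.insertNth_apply_same]
    have removal_eq := removeNth_eq_removeNth_of_sort_apply_eq_self (hp w)
      (by rw [heq, hp]) same_value
    rwa [Fin.removeNth_insertNth, heq, Fin.removeNth_insertNth] at removal_eq
  · rw [mem_filter_univ, mem_fixedValues] at hu
    obtain ⟨⟨x, hx, rfl⟩, hdisj⟩ := hu
    refine ⟨x.removeNth u, ?_, ?_⟩
    · exact (mem_filter_univ _).2 ((disjoint_fixedValues_removeNth hx hv).2 hdisj)
    · have hx' : sort (x.insertNth (u x) (x.removeNth u) : Fin (n + 1) → α) x = x := by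
        rwa [Fin.insertNth_self_removeNth]
      rw [insertNth_eq_insertNth_of_sort_apply_eq_self (hp _) hx', Fin.insertNth_self_removeNth]

theorem card_disjoint_insert_fixedValues_add (n : ℕ) {v : α} {S : Finset α} (hv : v ∉ S) :
    #{w : Fin (n + 1) → α | Disjoint (insert v S) (fixedValues w)} +
        #{w : Fin n → α | Disjoint S (fixedValues w)} =
      #{w : Fin (n + 1) → α | Disjoint S (fixedValues w)} := by
  rw [← card_mem_fixedValues_and_disjoint n hv, add_comm,
    ← card_filter_add_card_filter_not (s := {w : Fin (n + 1) → α | Disjoint S (fixedValues w)})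
      (fun w => v ∈ fixedValues w), filter_filter, filter_filter]
  simp only [disjoint_insert_left, and_comm]

theorem sum_range_neg_one_pow_mul_choose_succ {R : Type*} [CommRing R] (x : R) (s n : ℕ) :
    ∑ j ∈ range (n + 2), (-1 : R) ^ j * ((s + 1).choose j : R) * x ^ (n + 1 - j) =
      ∑ j ∈ range (n + 2), (-1 : R) ^ j * (s.choose j : R) * x ^ (n + 1 - j) -
        ∑ j ∈ range (n + 1), (-1 : R) ^ j * (s.choose j : R) * x ^ (n - j) := by
  rw [sum_range_succ', sum_range_succ' _ (n + 1), add_sub_right_comm, ← sum_sub_distrib]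
  simp only [Nat.choose_succ_succ, Nat.choose_zero_right, Nat.add_sub_add_right]
  congr 1
  refine sum_congr rfl fun j _ => ?_
  push_cast
  ring

theorem card_disjoint_fixedValues {R : Type*} [CommRing R] (n : ℕ) (S : Finset α) :
    (#{w : Fin n → α | Disjoint S (fixedValues w)} : R) =
      ∑ j ∈ range (n + 1), (-1 : R) ^ j * ((#S).choose j : R) * (Fintype.card α : R) ^ (n - j) := by
  induction S using Finset.induction_on generalizing n with
  | empty => simp [sum_range_succ']
  | insert v S hv ih =>
    cases n with
    | zero => simp [fixedValues]
    | succ n =>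
      rw [card_insert_of_notMem hv, sum_range_neg_one_pow_mul_choose_succ, ← ih, ← ih,
        ← card_disjoint_insert_fixedValues_add n hv, Nat.cast_add, add_sub_cancel_right]

theorem card_forall_sort_apply_ne {R : Type*} [CommRing R] (n : ℕ) :
    (#{w : Fin n → α | ∀ x, sort w x ≠ x} : R) =
      ∑ j ∈ range (n + 1),
        (-1 : R) ^ j * ((Fintype.card α).choose j : R) * (Fintype.card α : R) ^ (n - j) := by
  have univ_disjoint_iff (w : Fin n → α) :
      Disjoint univ (fixedValues w) ↔ ∀ x, sort w x ≠ x := by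
    rw [← top_eq_univ, top_disjoint, bot_eq_empty, fixedValues_eq_empty_iff]
  simpa only [card_univ, univ_disjoint_iff] using card_disjoint_fixedValues n (univ : Finset α)

end CountingFixedValues

section CountingByDescents

open Finset Tuple

theorem card_fin_orderEmbedding (m n : ℕ) : Nat.card (Fin m ↪o Fin n) = n.choose m := by
  rw [Nat.card_congr Set.powersetCard.ofFinEmbEquiv, Set.powersetCard.card, Nat.card_fin]

theorem val_le_val_of_strictMono {m n : ℕ} {f : Fin m → Fin n} (hf : StrictMono f) (i : Fin m) :
    (i : ℕ) ≤ f i := by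
  have := card_le_card_of_injOn f (s := Iio i) (t := Iio (f i))
    (fun j hj => by simpa using hf (by simpa using hj)) hf.injective.injOn
  simpa using this

variable {n : ℕ}

theorem strictMono_add_partialSum_iff {a : Fin (n + 1) → ℕ} {g : Fin n → ℕ} :
    StrictMono (a + Fin.partialSum g) ↔ ∀ i : Fin n, a i.castSucc < a i.succ + g i := by
  simp only [Fin.strictMono_iff_lt_succ, Pi.add_apply, Fin.partialSum_succ]
  exact forall_congr' fun i => by omega

theorem partialSum_le_of_le_one {g : Fin n → ℕ} (hg : ∀ i, g i ≤ 1) (i : Fin (n + 1)) :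
    Fin.partialSum g i ≤ i := by
  induction i using Fin.induction with
  | zero => simp
  | succ i ih =>
    rw [Fin.partialSum_succ, Fin.val_succ]
    exact Nat.add_le_add ih (hg i)

theorem partialSum_last {M : Type*} [AddCommMonoid M] (g : Fin n → M) :
    Fin.partialSum g (Fin.last n) = ∑ i, g i := by
  rw [Fin.partialSum, Fin.val_last, List.take_of_length_le (List.length_ofFn).le, List.sum_ofFn]

theorem card_forall_lt_succ_add (k : ℕ) {g : Fin n → ℕ} (hg : ∀ i, g i ≤ 1) :
    #{a : Fin (n + 1) → Fin k | ∀ i : Fin n, (a i.castSucc : ℕ) < a i.succ + g i} =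
      (k + ∑ i, g i).choose (n + 1) := by
  have mono : Monotone (Fin.partialSum g) :=
    Fin.monotone_iff_le_succ.2 fun i => by rw [Fin.partialSum_succ]; exact Nat.le_add_right _ _
  rw [← partialSum_last, ← card_fin_orderEmbedding, Nat.card_eq_fintype_card, ← card_univ]
  refine card_bij
    (fun a ha => OrderEmbedding.ofStrictMono
      (fun i => ⟨a i + Fin.partialSum g i, add_lt_add_of_lt_of_le (a i).2 (mono i.le_last)⟩)
      fun i j hij => strictMono_add_partialSum_iff (a := fun i => (a i : ℕ)).2
        ((mem_filter_univ a).1 ha) hij)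
    (fun _ _ => mem_univ _) (fun a _ a' _ heq => ?_) fun b _ => ?_
  · funext i
    have := congrArg Fin.val (DFunLike.congr_fun heq i)
    exact Fin.ext (Nat.add_right_cancel this)
  · let a i := (b i : ℕ) - Fin.partialSum g i
    have a_add (i) : a i + Fin.partialSum g i = b i := Nat.sub_add_cancel
      ((partialSum_le_of_le_one hg i).trans (val_le_val_of_strictMono b.strictMono i))
    have a_lt_succ : ∀ i : Fin n, a i.castSucc < a i.succ + g i := by
      rw [← strictMono_add_partialSum_iff]
      intro i j hij
      rw [Pi.add_apply, Pi.add_apply, a_add, a_add]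
      exact b.strictMono hij
    have a_mono : Monotone a := Fin.monotone_iff_le_succ.2 fun i => by
      have := a_lt_succ i
      have := hg i
      omega
    have a_lt (i) : a i < k := by
      have := a_mono i.le_last
      have := a_add (Fin.last n)
      have := (b (Fin.last n)).2
      omega
    exact ⟨fun i => ⟨a i, a_lt i⟩, (mem_filter_univ _).2 a_lt_succ,
      RelEmbedding.ext fun i => Fin.ext (a_add i)⟩

theorem oneLine_val_add_one (π : Equiv.Perm (Fin n)) (i : Fin n) :
    oneLine n π (i + 1) = π i + 1 :=
  dif_pos ⟨i.1.succ_pos, i.2⟩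

theorem des_succ_eq_card (π : Equiv.Perm (Fin (n + 1))) :
    des (n + 1) π = #{i : Fin n | π i.succ < π i.castSucc} := by
  have descent_iff (i : Fin n) : oneLine (n + 1) π (i + 1 + 1) < oneLine (n + 1) π (i + 1) ↔
      π i.succ < π i.castSucc := by
    have at_castSucc := oneLine_val_add_one π i.castSucc
    have at_succ := oneLine_val_add_one π i.succ
    rw [Fin.val_castSucc] at at_castSucc
    rw [Fin.val_succ] at at_succ
    rw [at_castSucc, at_succ, Nat.add_lt_add_iff_right, Fin.lt_def]
  symm
  refine card_bij (fun i _ => (i : ℕ) + 1) (fun i hi => ?_)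
    (fun i _ j _ h => Fin.ext (Nat.succ_injective h)) fun j hj => ?_
  · exact mem_filter.2 ⟨mem_Icc.2 ⟨i.1.succ_pos, i.2⟩,
      (descent_iff i).2 ((mem_filter_univ i).1 hi)⟩
  · obtain ⟨hj, descent⟩ := mem_filter.1 hj
    obtain ⟨i, rfl⟩ := Nat.exists_eq_add_of_le' (mem_Icc.1 hj).1
    exact ⟨⟨i, (mem_Icc.1 hj).2⟩, (mem_filter_univ _).2 ((descent_iff ⟨i, _⟩).1 descent), rfl⟩

theorem des_succ_le (π : Equiv.Perm (Fin (n + 1))) : des (n + 1) π ≤ n := by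
  simpa only [des_succ_eq_card, card_fin] using
    card_filter_le univ fun i : Fin n => π i.succ < π i.castSucc

theorem sort_eq_iff_forall_lt_succ_add {k : ℕ} {w : Fin (n + 1) → Fin k}
    {π : Equiv.Perm (Fin (n + 1))} :
    sort w = π ↔ ∀ i : Fin n, (w (π i.castSucc) : ℕ) <
      w (π i.succ) + if π i.succ < π i.castSucc then 0 else 1 := by
  rw [eq_comm, eq_sort_iff', Fin.strictMono_iff_lt_succ]
  refine forall_congr' fun i => ?_
  have := π.injective.ne i.castSucc_lt_succ.ne
  change toLex (w (π i.castSucc), π i.castSucc) < toLex (w (π i.succ), π i.succ) ↔ _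
  rw [Prod.Lex.toLex_lt_toLex]
  split_ifs <;> grind

theorem card_sort_eq (k : ℕ) (π : Equiv.Perm (Fin (n + 1))) :
    #{w : Fin (n + 1) → Fin k | sort w = π} = (k + (n - des (n + 1) π)).choose (n + 1) := by
  have ascents : ∑ i : Fin n, (if π i.succ < π i.castSucc then 0 else 1) =
      n - des (n + 1) π := by
    have descents_add_ascents := card_filter_add_card_filter_not (s := univ)
      fun i : Fin n => π i.succ < π i.castSucc
    rw [card_fin, ← des_succ_eq_card] at descents_add_ascents
    rw [← Nat.eq_sub_of_add_eq' descents_add_ascents, card_filter]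
    simp only [ite_not]
  rw [← ascents, ← card_forall_lt_succ_add k fun i => by split_ifs <;> omega]
  exact card_equiv (π.symm.arrowCongr (Equiv.refl _)) fun w => by
    simp [sort_eq_iff_forall_lt_succ_add]

theorem X_pow_succ_eq_one_sub_X_pow_mul_mk_choose {R : Type*} [CommRing R] {d n : ℕ} (hd : d ≤ n) :
    (PowerSeries.X : PowerSeries R) ^ (d + 1) = (1 - PowerSeries.X) ^ (n + 2) *
      PowerSeries.mk fun k => ((k + (n - d)).choose (n + 1) : R) := by
  have shift : PowerSeries.mk (fun k => ((k + (n - d)).choose (n + 1) : R)) =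
      PowerSeries.X ^ (d + 1) * PowerSeries.mk fun k => ((n + 1 + k).choose (n + 1) : R) := by
    ext k
    rw [PowerSeries.coeff_X_pow_mul', PowerSeries.coeff_mk]
    split_ifs with hk
    · rw [PowerSeries.coeff_mk]
      congr 2
      omega
    · rw [Nat.choose_eq_zero_of_lt (by omega), Nat.cast_zero]
  rw [shift, mul_left_comm, mul_comm (_ ^ (n + 2)),
    PowerSeries.mk_add_choose_mul_one_sub_pow_eq_one R, mul_one]

theorem X_pow_des_succ_eq {R : Type*} [CommRing R] (π : Equiv.Perm (Fin (n + 1))) :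
    (PowerSeries.X : PowerSeries R) ^ (des (n + 1) π + 1) = (1 - PowerSeries.X) ^ (n + 2) *
      PowerSeries.mk fun k => (#{w : Fin (n + 1) → Fin k | sort w = π} : R) := by
  simp only [card_sort_eq, X_pow_succ_eq_one_sub_X_pow_mul_mk_choose (des_succ_le π)]

theorem card_filter_comp {ι κ : Type*} [Fintype ι] [Fintype κ] [DecidableEq κ] (f : ι → κ)
    (P : κ → Prop) [DecidablePred P] : #{i | P (f i)} = ∑ b with P b, #{i | f i = b} := by
  rw [card_eq_sum_card_fiberwise (f := f) (t := {b | P b}) fun i hi => by simpa using hi]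
  refine sum_congr rfl fun b hb => ?_
  rw [filter_filter]
  congr 1
  ext i
  simp only [mem_filter_univ] at hb ⊢
  exact ⟨And.right, fun h => ⟨h ▸ hb, h⟩⟩

end CountingByDescents

theorem stmt17 (n : ℕ) (hn : 1 ≤ n) :
    (∑ π ∈ (Finset.univ.filter fun π : Equiv.Perm (Fin n) => ∀ x, π x ≠ x),
        (PowerSeries.X : PowerSeries ℚ) ^ (des n π + 1))
      = (1 - PowerSeries.X) ^ (n + 1)
          * PowerSeries.mk (fun k =>
              ∑ j ∈ Finset.range (n + 1),
                (-1 : ℚ) ^ j * (k.choose j : ℚ) * (k : ℚ) ^ (n - j)) := by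
  obtain ⟨m, rfl⟩ := Nat.exists_eq_add_of_le' hn
  rw [Finset.sum_congr rfl fun π _ => X_pow_des_succ_eq π, ← Finset.mul_sum]
  congr 1
  ext k
  have derangement_words := card_forall_sort_apply_ne (R := ℚ) (α := Fin k) (m + 1)
  rw [Fintype.card_fin, card_filter_comp Tuple.sort fun π => ∀ x, π x ≠ x, Nat.cast_sum]
    at derangement_words
  simpa only [map_sum, PowerSeries.coeff_mk] using derangement_words

end
end
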